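/- Assume G is an elementary abelian 2-group with |G| = n, and assume that the image of n in F is not equal to any of 1, 2, 4. Then the Terwilliger F-algebra T is isomorphic, as an F-algebra, to M₆(F) × M₅(F) × F. -/

import Mathlib

open Matrix

abbrev XG (G : Type) [Group G] : Type := {v : Fin 3 → G // v 0 * v 1 = v 2}

def cIdx : Fin 5 → Fin 3
  | 0 => 0
  | 1 => 0
  | 2 => 1
  | 3 => 2
  | 4 => 0

def rel {G : Type} [Group G] (i : Fin 5) (y z : XG G) : Prop :=
  if i = 0 then y = z
  else if i = 4 then ∀ d : Fin 3, y.1 d ≠ z.1 d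
  else y ≠ z ∧ y.1 (cIdx i) = z.1 (cIdx i)

instance {G : Type} [Group G] [DecidableEq G] (i : Fin 5) (y z : XG G) :
    Decidable (rel i y z) := by
  unfold rel
  infer_instance

def Adj (F : Type) [Field F] {G : Type} [Group G] [DecidableEq G] (i : Fin 5) :
    Matrix (XG G) (XG G) F :=
  Matrix.of fun y z => if rel i y z then 1 else 0

def DualE (F : Type) [Field F] {G : Type} [Group G] [DecidableEq G] (x : XG G) (i : Fin 5) :
    Matrix (XG G) (XG G) F :=
  Matrix.of fun y z => if y = z ∧ rel i x y then 1 else 0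

def AllOne (F : Type) [Field F] (G : Type) [Group G] : Matrix (XG G) (XG G) F :=
  Matrix.of fun _ _ => 1

def genSet (F : Type) [Field F] (G : Type) [Group G] [Fintype G] [DecidableEq G]
    (x : XG G) : Set (Matrix (XG G) (XG G) F) :=
  {M | ∃ a b c : Fin 5, M = DualE F x a * Adj F b * DualE F x c}

def TerwilligerAlg (F : Type) [Field F] (G : Type) [Group G] [Fintype G] [DecidableEq G]
    (x : XG G) : Subalgebra F (Matrix (XG G) (XG G) F) :=
  Algebra.adjoin F (genSet F G x)

section Abstract

set_option linter.unusedSectionVars false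

variable {F R U V : Type} [Field F] [Ring R] [Algebra F R] [Fintype U] [DecidableEq U]
  [Fintype V] [DecidableEq V]

/-- the linear combination of a family `m` with coefficients `A` -/
def comb (m : U → U → R) : Matrix U U F →ₗ[F] R where
  toFun A := ∑ u, ∑ v, A u v • m u v
  map_add' A B := by simp [add_smul, Finset.sum_add_distrib]
  map_smul' c A := by simp [mul_smul, Finset.smul_sum]

theorem comb_apply (m : U → U → R) (A : Matrix U U F) :
    comb m A = ∑ u, ∑ v, A u v • m u v := rfl

theorem comb_single (m : U → U → R) (p q : U) :
    comb m (Matrix.single p q (1 : F)) = m p q := by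
  rw [comb_apply, Finset.sum_eq_single p, Finset.sum_eq_single q]
  · simp
  · intro b _ hb; simp [Matrix.single_apply, hb.symm]
  · simp
  · intro b _ hb; simp [Matrix.single_apply, hb.symm]
  · simp

theorem comb_mul (m : U → U → R) (Γ : Matrix U U F)
    (hm : ∀ u v w z, m u v * m w z = Γ v w • m u z) (A B : Matrix U U F) :
    comb m A * comb m B = comb m (A * Γ * B) := by
  simp only [comb_apply, Finset.sum_mul, Finset.mul_sum, Matrix.mul_apply, Finset.sum_smul,
    smul_mul_smul_comm, hm, smul_smul]
  conv_lhs =>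
    enter [2, w]
    rw [Finset.sum_comm]
  rw [Finset.sum_comm]
  refine Finset.sum_congr rfl fun u _ => ?_
  rw [Finset.sum_comm]
  refine Finset.sum_congr rfl fun z _ => ?_
  refine Finset.sum_congr rfl fun w _ => ?_
  refine Finset.sum_congr rfl fun v _ => ?_
  congr 1
  ring

theorem comb_mul_zero (m : U → U → R) (k : V → V → R)
    (h : ∀ u v a b, m u v * k a b = 0) (A : Matrix U U F) (B : Matrix V V F) :
    comb m A * comb k B = 0 := by
  simp [comb_apply, Finset.sum_mul, Finset.mul_sum, h]

theorem comb_mul_zero' (m : U → U → R) (z : R)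
    (h : ∀ u v, m u v * z = 0) (A : Matrix U U F) :
    comb m A * z = 0 := by
  simp [comb_apply, Finset.sum_mul, h]

theorem comb_mem (m : U → U → R) (T : Subalgebra F R) (h : ∀ u v, m u v ∈ T)
    (A : Matrix U U F) : comb m A ∈ T :=
  T.sum_mem fun _ _ => T.sum_mem fun _ _ => T.smul_mem (h _ _) _

theorem comb_inj (m : U → U → R) (Γ : Matrix U U F)
    (hm : ∀ u v w z, m u v * m w z = Γ v w • m u z) (hΓ : IsUnit Γ.det)
    (p q : U) (hpq : m p q ≠ 0) (A : Matrix U U F) (h : comb m A = 0) : A = 0 := by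
  have key : ∀ u v, (Γ * A * Γ) u v = 0 := by
    intro u v
    have h1 : comb m (Matrix.single p u (1 : F)) * comb m A
        * comb m (Matrix.single v q (1 : F)) = 0 := by rw [h]; simp
    rw [comb_mul m Γ hm, comb_mul m Γ hm] at h1
    have h2 : Matrix.single p u (1 : F) * Γ * A * Γ * Matrix.single v q (1 : F)
        = (Γ * A * Γ) u v • Matrix.single p q (1 : F) := by
      rw [Matrix.mul_assoc (Matrix.single p u (1 : F)), Matrix.mul_assoc (Matrix.single p u (1 : F)),
        Matrix.single_mul_mul_single]
      simp
    rw [h2, map_smul, comb_single] at h1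
    exact (smul_eq_zero.mp h1).resolve_right hpq
  have h3 : Γ * A * Γ = 0 := by ext u v; exact key u v
  calc A = Γ⁻¹ * (Γ * A * Γ) * Γ⁻¹ := by
        rw [Matrix.mul_assoc Γ, Matrix.nonsing_inv_mul_cancel_left _ _ hΓ,
          Matrix.mul_nonsing_inv_cancel_right _ _ hΓ]
    _ = 0 := by rw [h3]; simp

theorem abstract_iso (T : Subalgebra F R) (m : U → U → R) (k : V → V → R)
    (Γ : Matrix U U F) (S : Matrix V V F) (hΓ : IsUnit Γ.det) (hS : IsUnit S.det)
    (hm : ∀ u v w z, m u v * m w z = Γ v w • m u z)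
    (hk : ∀ u v w z, k u v * k w z = S v w • k u z)
    (hmk : ∀ u v a b, m u v * k a b = 0) (hkm : ∀ a b u v, k a b * m u v = 0)
    (p q : U) (hpq : m p q ≠ 0) (a b : V) (hab : k a b ≠ 0)
    (z : R) (hz : z ≠ 0) (hmz : ∀ u v, m u v * z = 0) (hkz : ∀ u v, k u v * z = 0)
    (hmT : ∀ u v, m u v ∈ T) (hkT : ∀ a b, k a b ∈ T)
    (hT : ∀ R' : Subalgebra F R, (∀ u v, m u v ∈ R') → (∀ a b, k a b ∈ R') → T ≤ R') :
    Nonempty (T ≃ₐ[F] (Matrix U U F × Matrix V V F × F)) := by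
  let ψ₁ : Matrix U U F → R := fun A => comb m (A * Γ⁻¹)
  let ψ₂ : Matrix V V F → R := fun A => comb k (A * S⁻¹)
  have hψ₁ : ∀ A B, ψ₁ A * ψ₁ B = ψ₁ (A * B) := by
    intro A B
    simp only [ψ₁]
    rw [comb_mul m Γ hm, Matrix.nonsing_inv_mul_cancel_right _ _ hΓ, Matrix.mul_assoc]
  have hψ₂ : ∀ A B, ψ₂ A * ψ₂ B = ψ₂ (A * B) := by
    intro A B
    simp only [ψ₂]
    rw [comb_mul k S hk, Matrix.nonsing_inv_mul_cancel_right _ _ hS, Matrix.mul_assoc]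
  have h12 : ∀ A B, ψ₁ A * ψ₂ B = 0 := fun A B => comb_mul_zero m k hmk _ _
  have h21 : ∀ A B, ψ₂ A * ψ₁ B = 0 := fun A B => comb_mul_zero k m hkm _ _
  have hs1 : ∀ (c : F) A, ψ₁ (c • A) = c • ψ₁ A := by intro c A; simp [ψ₁]
  have hs2 : ∀ (c : F) A, ψ₂ (c • A) = c • ψ₂ A := by intro c A; simp [ψ₂]
  have ha1 : ∀ A B, ψ₁ (A + B) = ψ₁ A + ψ₁ B := by intro c A; simp [ψ₁, Matrix.add_mul]
  have ha2 : ∀ A B, ψ₂ (A + B) = ψ₂ A + ψ₂ B := by intro c A; simp [ψ₂, Matrix.add_mul]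
  let e : R := 1 - ψ₁ 1 - ψ₂ 1
  have he1 : ∀ A, e * ψ₁ A = 0 := by intro A; simp [e, sub_mul, hψ₁, h21]
  have he2 : ∀ A, e * ψ₂ A = 0 := by intro A; simp [e, sub_mul, hψ₂, h12]
  have he1' : ∀ A, ψ₁ A * e = 0 := by intro A; simp [e, mul_sub, hψ₁, h12]
  have he2' : ∀ A, ψ₂ A * e = 0 := by intro A; simp [e, mul_sub, hψ₂, h21]
  have hee : e * e = e := by
    conv_lhs => enter [2]; simp only [e]
    rw [mul_sub, mul_sub, he1, he2]; simp
  let lin : (Matrix U U F × Matrix V V F × F) →ₗ[F] R :=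
    { toFun := fun w => ψ₁ w.1 + ψ₂ w.2.1 + w.2.2 • e
      map_add' := by
        intro w w'
        simp only [Prod.fst_add, Prod.snd_add, ha1, ha2, add_smul]
        abel
      map_smul' := by
        intro c w
        simp only [Prod.smul_fst, Prod.smul_snd, hs1, hs2, smul_add, smul_eq_mul, mul_smul,
          RingHom.id_apply] }
  have hlin : ∀ w, lin w = ψ₁ w.1 + ψ₂ w.2.1 + w.2.2 • e := fun w => rfl
  let φ : (Matrix U U F × Matrix V V F × F) →ₐ[F] R := AlgHom.ofLinearMap lin
    (by rw [hlin]; simp [e]) (by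
      intro w w'
      simp only [hlin, add_mul, mul_add, hψ₁, hψ₂, h12, h21, he1, he2, he1', he2',
        smul_mul_assoc, mul_smul_comm, hee, Prod.fst_mul, Prod.snd_mul, smul_zero, add_zero,
        zero_add, smul_smul, mul_comm w.2.2])
  have hφ : ∀ w, φ w = ψ₁ w.1 + ψ₂ w.2.1 + w.2.2 • e := fun w => rfl
  have hz1 : ∀ A, ψ₁ A * z = 0 := fun A => comb_mul_zero' m z hmz _
  have hz2 : ∀ A, ψ₂ A * z = 0 := fun A => comb_mul_zero' k z hkz _
  have hinj : Function.Injective φ := by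
    rw [injective_iff_map_eq_zero]
    rintro ⟨A, B, c⟩ h
    rw [hφ] at h
    simp only at h
    have hc : c = 0 := by
      have h1 := congrArg (· * z) h
      simp only [add_mul, hz1, hz2, e, smul_mul_assoc, sub_mul, zero_mul, sub_zero, zero_add,
        one_mul] at h1
      exact (smul_eq_zero.mp h1).resolve_right hz
    subst hc
    rw [zero_smul, add_zero] at h
    have hA : ψ₁ A = 0 := by
      have h1 := congrArg (ψ₁ 1 * ·) h
      simpa [mul_add, hψ₁, h12] using h1
    have hB : ψ₂ B = 0 := by simpa [hA] using h
    have hA' := comb_inj m Γ hm hΓ p q hpq _ hA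
    have hB' := comb_inj k S hk hS a b hab _ hB
    have hA'' : A = 0 := by
      rw [← Matrix.nonsing_inv_mul_cancel_right _ A hΓ, hA', Matrix.zero_mul]
    have hB'' : B = 0 := by
      rw [← Matrix.nonsing_inv_mul_cancel_right _ B hS, hB', Matrix.zero_mul]
    subst hA'' hB''
    rfl
  have hr1 : ∀ u v, m u v ∈ φ.range := by
    intro u v
    refine ⟨(Matrix.single u v 1 * Γ, 0, 0), ?_⟩
    change φ _ = _
    rw [hφ]
    simp only [ψ₁, ψ₂]
    rw [Matrix.mul_nonsing_inv_cancel_right _ _ hΓ, comb_single]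
    simp
  have hr2 : ∀ u v, k u v ∈ φ.range := by
    intro u v
    refine ⟨(0, Matrix.single u v 1 * S, 0), ?_⟩
    change φ _ = _
    rw [hφ]
    simp only [ψ₁, ψ₂]
    rw [Matrix.mul_nonsing_inv_cancel_right _ _ hS, comb_single]
    simp
  have hrange : φ.range = T := by
    apply le_antisymm
    · rintro _ ⟨w, rfl⟩
      change φ w ∈ T
      rw [hφ]
      have t1 : ∀ A, ψ₁ A ∈ T := fun A => comb_mem m T hmT _
      have t2 : ∀ A, ψ₂ A ∈ T := fun A => comb_mem k T hkT _
      exact T.add_mem (T.add_mem (t1 _) (t2 _))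
        (T.smul_mem (T.sub_mem (T.sub_mem T.one_mem (t1 _)) (t2 _)) _)
    · exact hT _ hr1 hr2
  exact ⟨((AlgEquiv.ofInjective φ hinj).trans (Subalgebra.equivOfEq _ _ hrange)).symm⟩

end Abstract

section Concrete

set_option linter.unusedSectionVars false

variable (F : Type) [Field F] {G : Type} [Group G] [Fintype G] [DecidableEq G]

/-- coordinates relative to the base point -/
def dd (x y : XG G) (i : Fin 3) : G := (x.1 i)⁻¹ * y.1 i

theorem dd_eq (x y z : XG G) (i : Fin 3) : dd x y i = dd x z i ↔ y.1 i = z.1 i := by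
  simp [dd]

theorem dd_eq_one (x y : XG G) (i : Fin 3) : dd x y i = 1 ↔ x.1 i = y.1 i := by
  simp [dd, inv_mul_eq_one]

theorem dd_self (x : XG G) (i : Fin 3) : dd x x i = 1 := by simp [dd]

theorem elem_comm (helem : ∀ a : G, a ^ 2 = 1) (a b : G) : a * b = b * a := by
  have h : ∀ a : G, a⁻¹ = a := fun a => by
    rw [inv_eq_iff_mul_eq_one, ← pow_two, helem]
  calc a * b = (a * b)⁻¹ := (h _).symm
    _ = b * a := by rw [_root_.mul_inv_rev, h, h]

/-- the point with given first two relative coordinates -/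
def mk (hc : ∀ a b : G, a * b = b * a) (x : XG G) (a b : G) : XG G :=
  ⟨![x.1 0 * a, x.1 1 * b, x.1 2 * (a * b)], by
    have := x.2
    simp only [Matrix.cons_val_zero, Matrix.cons_val_one, Matrix.cons_val]
    rw [← this, mul_assoc, ← mul_assoc a, hc a]; simp only [mul_assoc]⟩

theorem dd_mk (hc : ∀ a b : G, a * b = b * a) (x : XG G) (a b : G) :
    dd x (mk hc x a b) 0 = a ∧ dd x (mk hc x a b) 1 = b ∧ dd x (mk hc x a b) 2 = a * b := by
  simp [dd, mk]

theorem dd_prod (hc : ∀ a b : G, a * b = b * a) (x y : XG G) :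
    dd x y 0 * dd x y 1 = dd x y 2 := by
  simp only [dd, ← x.2, ← y.2]
  rw [_root_.mul_inv_rev, hc (x.1 1)⁻¹ (x.1 0)⁻¹, mul_assoc, mul_assoc]
  congr 1
  rw [← mul_assoc, hc (y.1 0), mul_assoc]

theorem pt_ext (x y z : XG G) (i j : Fin 3) (hij : i ≠ j) (h1 : dd x y i = dd x z i)
    (h2 : dd x y j = dd x z j) : y = z := by
  rw [dd_eq] at h1 h2
  obtain ⟨y, hy⟩ := y
  obtain ⟨z, hz⟩ := z
  simp only at h1 h2
  have key : y 0 = z 0 ∧ y 1 = z 1 ∧ y 2 = z 2 := by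
    fin_cases i <;> fin_cases j <;> simp_all [← hz]
    all_goals first
      | (have := hy.trans hz.symm; simpa [h1, h2] using this)
      | (rw [← hy, ← hz] at h1; simpa [h2] using h1)
      | (rw [← hy, ← hz] at h2; simpa [h1] using h2)
  congr 1
  funext t
  fin_cases t
  · exact key.1
  · exact key.2.1
  · exact key.2.2

theorem pt_eq (x y : XG G) (i j : Fin 3) (hij : i ≠ j) (h1 : dd x y i = 1)
    (h2 : dd x y j = 1) : y = x :=
  pt_ext x y x i j hij (by rw [h1, dd_self]) (by rw [h2, dd_self])

theorem sq_one (helem : ∀ a : G, a ^ 2 = 1) (a : G) : a * a = 1 := by rw [← pow_two, helem]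

theorem dd_other (helem : ∀ a : G, a ^ 2 = 1) (x y : XG G) (i j k : Fin 3) (hj : j ≠ i)
    (hk : k ≠ i) (h : dd x y i = 1) : dd x y j = dd x y k := by
  have hp := dd_prod (elem_comm helem) x y
  have h0 := sq_one helem (dd x y 0)
  fin_cases i <;> fin_cases j <;> fin_cases k <;> simp_all
  · exact (mul_left_cancel (h0.trans hp.symm))
  · exact (mul_left_cancel (h0.trans hp.symm)).symm

theorem pair_surj (helem : ∀ a : G, a ^ 2 = 1) (x : XG G) (i j : Fin 3) (hij : i ≠ j) (g h : G) :
    ∃ y, dd x y i = g ∧ dd x y j = h := by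
  have hc := elem_comm helem
  have hs : ∀ a b : G, a * (a * b) = b := fun a b => by
    rw [← mul_assoc, sq_one helem, one_mul]
  have hs' : ∀ a b : G, a * b * a = b := fun a b => by rw [hc a b, mul_assoc, sq_one helem, mul_one]
  fin_cases i <;> fin_cases j
  · exact absurd rfl hij
  · exact ⟨mk hc x g h, (dd_mk hc x _ _).1, (dd_mk hc x _ _).2.1⟩
  · exact ⟨mk hc x g (g * h), (dd_mk hc x _ _).1, (dd_mk hc x _ _).2.2.trans (hs _ _)⟩
  · exact ⟨mk hc x h g, (dd_mk hc x _ _).2.1, (dd_mk hc x _ _).1⟩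
  · exact absurd rfl hij
  · exact ⟨mk hc x (g * h) g, (dd_mk hc x _ _).2.1, (dd_mk hc x _ _).2.2.trans (hs' _ _)⟩
  · exact ⟨mk hc x h (h * g), (dd_mk hc x _ _).2.2.trans (hs _ _), (dd_mk hc x _ _).1⟩
  · exact ⟨mk hc x (h * g) h, (dd_mk hc x _ _).2.2.trans (hs' _ _), (dd_mk hc x _ _).2.1⟩
  · exact absurd rfl hij

theorem pair_sum (helem : ∀ a : G, a ^ 2 = 1) (x : XG G) (i j : Fin 3) (hij : i ≠ j)
    (f : G → G → F) : ∑ y, f (dd x y i) (dd x y j) = ∑ g, ∑ h, f g h := by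
  rw [← Fintype.sum_prod_type']
  refine Fintype.sum_bijective (fun y => (dd x y i, dd x y j)) ⟨?_, ?_⟩ _ _ (fun y => rfl)
  · intro y z h
    exact pt_ext x y z i j hij (congrArg Prod.fst h) (congrArg Prod.snd h)
  · rintro ⟨g, h⟩
    obtain ⟨y, h1, h2⟩ := pair_surj helem x i j hij g h
    exact ⟨y, by simp [h1, h2]⟩

/-- incidence matrices -/
def LL (x : XG G) : Fin 3 ⊕ Fin 3 → Matrix G (XG G) F
  | Sum.inl i => Matrix.of fun g y => if dd x y i = 1 ∧ dd x y (i + 1) = g then 1 else 0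
  | Sum.inr i => Matrix.of fun g y => if dd x y i = g then 1 else 0

/-- delta at one -/
def del : G → F := fun g => if g = 1 then 1 else 0

theorem succ_ne (i : Fin 3) : i + 1 ≠ i := by fin_cases i <;> decide

theorem LL_inl (helem : ∀ a : G, a ^ 2 = 1) (x : XG G) (i j : Fin 3) (hij : j ≠ i) :
    LL F x (Sum.inl i) = Matrix.of fun g y => if dd x y i = 1 ∧ dd x y j = g then 1 else 0 := by
  ext g y
  simp only [LL, Matrix.of_apply]
  refine if_congr ?_ rfl rfl
  refine and_congr_right fun h => ?_
  rw [dd_other helem x y i (i + 1) j (succ_ne i) hij h]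

theorem gram_ll (helem : ∀ a : G, a ^ 2 = 1) (x : XG G) (i : Fin 3) :
    LL F x (Sum.inl i) * (LL F x (Sum.inl i))ᵀ = 1 := by
  ext g h
  rw [Matrix.mul_apply]
  simp only [LL, Matrix.of_apply, Matrix.transpose_apply]
  rw [pair_sum F helem x i (i + 1) (succ_ne i).symm (fun a b =>
    (if a = 1 ∧ b = g then 1 else 0) * (if a = 1 ∧ b = h then 1 else 0))]
  simp [ite_and, Matrix.one_apply, eq_comm]

theorem gram_ll' (helem : ∀ a : G, a ^ 2 = 1) (x : XG G) (i j : Fin 3) (hij : i ≠ j) :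
    LL F x (Sum.inl i) * (LL F x (Sum.inl j))ᵀ = Matrix.vecMulVec (del F) (del F) := by
  rw [LL_inl F helem x i j hij.symm, LL_inl F helem x j i hij]
  ext g h
  rw [Matrix.mul_apply]
  simp only [Matrix.of_apply, Matrix.transpose_apply]
  rw [pair_sum F helem x i j hij (fun a b =>
    (if a = 1 ∧ b = g then 1 else 0) * (if b = 1 ∧ a = h then 1 else 0))]
  simp [ite_and, Matrix.vecMulVec_apply, del, eq_comm]

theorem gram_lk (helem : ∀ a : G, a ^ 2 = 1) (x : XG G) (i : Fin 3) :
    LL F x (Sum.inl i) * (LL F x (Sum.inr i))ᵀ = Matrix.vecMulVec 1 (del F) := by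
  ext g h
  rw [Matrix.mul_apply]
  simp only [LL, Matrix.of_apply, Matrix.transpose_apply]
  rw [pair_sum F helem x i (i + 1) (succ_ne i).symm (fun a b =>
    (if a = 1 ∧ b = g then 1 else 0) * (if a = h then 1 else 0))]
  simp [ite_and, Matrix.vecMulVec_apply, del, eq_comm]

theorem gram_lk' (helem : ∀ a : G, a ^ 2 = 1) (x : XG G) (i j : Fin 3) (hij : i ≠ j) :
    LL F x (Sum.inl i) * (LL F x (Sum.inr j))ᵀ = 1 := by
  rw [LL_inl F helem x i j hij.symm]
  ext g h
  rw [Matrix.mul_apply]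
  simp only [LL, Matrix.of_apply, Matrix.transpose_apply]
  rw [pair_sum F helem x i j hij (fun a b =>
    (if a = 1 ∧ b = g then 1 else 0) * (if b = h then 1 else 0))]
  simp [ite_and, Matrix.one_apply, eq_comm]

theorem gram_kl (helem : ∀ a : G, a ^ 2 = 1) (x : XG G) (i : Fin 3) :
    LL F x (Sum.inr i) * (LL F x (Sum.inl i))ᵀ = Matrix.vecMulVec (del F) 1 := by
  have := congrArg Matrix.transpose (gram_lk F helem x i)
  rw [Matrix.transpose_mul, Matrix.transpose_transpose, Matrix.transpose_vecMulVec] at this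
  exact this

theorem gram_kl' (helem : ∀ a : G, a ^ 2 = 1) (x : XG G) (i j : Fin 3) (hij : i ≠ j) :
    LL F x (Sum.inr i) * (LL F x (Sum.inl j))ᵀ = 1 := by
  have := congrArg Matrix.transpose (gram_lk' F helem x j i hij.symm)
  rw [Matrix.transpose_mul, Matrix.transpose_transpose, Matrix.transpose_one] at this
  exact this

theorem gram_kk (helem : ∀ a : G, a ^ 2 = 1) (x : XG G) (i : Fin 3) :
    LL F x (Sum.inr i) * (LL F x (Sum.inr i))ᵀ = (Fintype.card G : F) • 1 := by
  ext g h
  rw [Matrix.mul_apply]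
  simp only [LL, Matrix.of_apply, Matrix.transpose_apply]
  rw [pair_sum F helem x i (i + 1) (succ_ne i).symm (fun a b =>
    (if a = g then 1 else 0) * (if a = h then 1 else 0))]
  simp [Matrix.one_apply, eq_comm]

theorem gram_kk' (helem : ∀ a : G, a ^ 2 = 1) (x : XG G) (i j : Fin 3) (hij : i ≠ j) :
    LL F x (Sum.inr i) * (LL F x (Sum.inr j))ᵀ = Matrix.vecMulVec 1 1 := by
  ext g h
  rw [Matrix.mul_apply]
  simp only [LL, Matrix.of_apply, Matrix.transpose_apply]
  rw [pair_sum F helem x i j hij (fun a b =>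
    (if a = g then 1 else 0) * (if b = h then 1 else 0))]
  simp [Matrix.vecMulVec_apply]

/-- the Gram matrix modulo trivial part -/
def Gam (n : F) : Matrix (Fin 3 ⊕ Fin 3) (Fin 3 ⊕ Fin 3) F :=
  Matrix.fromBlocks 1 (Matrix.of fun i j => if i = j then 0 else 1)
    (Matrix.of fun i j => if i = j then 0 else 1) (n • 1)

theorem Gam_det (n : F) (h1 : n ≠ 1) (h4 : n ≠ 4) : IsUnit (Gam F n).det := by
  have e : (Gam F n).det = (n - 1) * (n - 1) * (n - 4) := by
    rw [Gam, Matrix.det_fromBlocks_one₁₁, Matrix.det_fin_three]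
    simp [Matrix.mul_apply, Fin.sum_univ_three]
    ring
  rw [e, isUnit_iff_ne_zero]
  exact mul_ne_zero (mul_ne_zero (sub_ne_zero.mpr h1) (sub_ne_zero.mpr h1)) (sub_ne_zero.mpr h4)

/-- the projection -/
def QQ (G : Type) [Group G] [Fintype G] [DecidableEq G] : Matrix G G F :=
  1 - Matrix.vecMulVec (del F) (del F)
    - ((Fintype.card G : F) - 1)⁻¹ • Matrix.vecMulVec (1 - del F) (1 - del F)

theorem QQ_del : QQ F G *ᵥ del F = 0 := by
  have h1 : (del F : G → F) ⬝ᵥ del F = 1 := by simp [dotProduct, del]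
  have h2 : (1 - del F : G → F) ⬝ᵥ del F = 0 := by
    rw [sub_dotProduct, h1]; simp [dotProduct, del]
  simp [QQ, Matrix.sub_mulVec, Matrix.smul_mulVec, Matrix.vecMulVec_mulVec, h1, h2]

theorem QQ_one (hn : (Fintype.card G : F) ≠ 1) : QQ F G *ᵥ 1 = 0 := by
  have h1 : (del F : G → F) ⬝ᵥ 1 = 1 := by simp [dotProduct, del]
  have h2 : (1 - del F : G → F) ⬝ᵥ 1 = (Fintype.card G : F) - 1 := by
    rw [sub_dotProduct, h1]; simp [dotProduct]
  have h3 : ((Fintype.card G : F) - 1) ≠ 0 := sub_ne_zero.mpr hn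
  simp [QQ, Matrix.sub_mulVec, Matrix.smul_mulVec, Matrix.vecMulVec_mulVec, h1, h2]
  ext g
  simp
  field_simp
  ring

theorem QQ_tr : (QQ F G)ᵀ = QQ F G := by
  simp [QQ, Matrix.transpose_sub, Matrix.transpose_smul, Matrix.transpose_vecMulVec]

theorem QQ_sq (hn : (Fintype.card G : F) ≠ 1) : QQ F G * QQ F G = QQ F G := by
  conv_lhs => enter [2]; rw [QQ]
  simp [Matrix.mul_sub, Matrix.mul_vecMulVec, QQ_del, QQ_one F hn, Matrix.mulVec_sub]

theorem QQ_gram (helem : ∀ a : G, a ^ 2 = 1) (hn : (Fintype.card G : F) ≠ 1) (x : XG G)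
    (u v : Fin 3 ⊕ Fin 3) :
    QQ F G * (LL F x u * (LL F x v)ᵀ) = Gam F (Fintype.card G : F) u v • QQ F G := by
  rcases u with i | i <;> rcases v with j | j <;> by_cases hij : i = j
  · subst hij; simp [gram_ll F helem, Gam]
  · simp [gram_ll' F helem x i j hij, Gam, Matrix.mul_vecMulVec, QQ_del, Matrix.one_apply, hij]
  · subst hij; rw [gram_lk F helem, Matrix.mul_vecMulVec, QQ_one F hn]; simp [Gam]
  · simp [gram_lk' F helem x i j hij, Gam, hij]
  · subst hij; rw [gram_kl F helem, Matrix.mul_vecMulVec, QQ_del]; simp [Gam]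
  · simp [gram_kl' F helem x i j hij, Gam, hij]
  · subst hij; simp [gram_kk F helem, Gam]
  · rw [gram_kk' F helem x i j hij, Matrix.mul_vecMulVec, QQ_one F hn]; simp [Gam, hij]

/-- indicator of a line through the base point -/
def kk (x : XG G) (i : Fin 3) : XG G → F := fun y => if dd x y i = 1 then 1 else 0

/-- indicator of the base point -/
def bb (x : XG G) : XG G → F := fun y => if y = x then 1 else 0

/-- the five trivial vectors -/
def kap (x : XG G) : Fin 5 → XG G → F := ![bb F x, kk F x 0, kk F x 1, kk F x 2, 1]

theorem LL_del_inl (x : XG G) (i : Fin 3) : (LL F x (Sum.inl i))ᵀ *ᵥ del F = bb F x := by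
  ext y
  have : (dd x y i = 1 ∧ dd x y (i + 1) = 1) ↔ y = x :=
    ⟨fun h => pt_eq x y i (i + 1) (succ_ne i).symm h.1 h.2, fun h => by simp [h, dd_self]⟩
  simp [Matrix.mulVec, dotProduct, LL, del, bb, this]

theorem LL_del_inr (x : XG G) (i : Fin 3) : (LL F x (Sum.inr i))ᵀ *ᵥ del F = kk F x i := by
  ext y
  simp [Matrix.mulVec, dotProduct, LL, del, kk]

theorem LL_one_inl (x : XG G) (i : Fin 3) : (LL F x (Sum.inl i))ᵀ *ᵥ 1 = kk F x i := by
  ext y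
  simp [Matrix.mulVec, dotProduct, LL, kk, ite_and]

theorem LL_one_inr (x : XG G) (i : Fin 3) : (LL F x (Sum.inr i))ᵀ *ᵥ 1 = 1 := by
  ext y
  simp [Matrix.mulVec, dotProduct, LL]

theorem kap_src (hn : (Fintype.card G : F) ≠ 1) (x : XG G) (a : Fin 5) :
    ∃ u w, QQ F G *ᵥ w = 0 ∧ kap F x a = (LL F x u)ᵀ *ᵥ w := by
  fin_cases a
  · exact ⟨Sum.inl 0, del F, QQ_del F, (LL_del_inl F x 0).symm⟩
  · exact ⟨Sum.inr 0, del F, QQ_del F, (LL_del_inr F x 0).symm⟩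
  · exact ⟨Sum.inr 1, del F, QQ_del F, (LL_del_inr F x 1).symm⟩
  · exact ⟨Sum.inr 2, del F, QQ_del F, (LL_del_inr F x 2).symm⟩
  · exact ⟨Sum.inr 0, 1, QQ_one F hn, (LL_one_inr F x 0).symm⟩

theorem kk_kap (x : XG G) (i : Fin 3) : ∃ a, kk F x i = kap F x a := by
  fin_cases i
  · exact ⟨1, rfl⟩
  · exact ⟨2, rfl⟩
  · exact ⟨3, rfl⟩

theorem LL_del (x : XG G) (u) : ∃ a, (LL F x u)ᵀ *ᵥ del F = kap F x a := by
  rcases u with i | i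
  · exact ⟨0, LL_del_inl F x i⟩
  · rw [LL_del_inr]; exact kk_kap F x i

theorem LL_one (x : XG G) (u) : ∃ a, (LL F x u)ᵀ *ᵥ 1 = kap F x a := by
  rcases u with i | i
  · rw [LL_one_inl]; exact kk_kap F x i
  · exact ⟨4, LL_one_inr F x i⟩

theorem QL_kap (helem : ∀ a : G, a ^ 2 = 1) (hn : (Fintype.card G : F) ≠ 1) (x : XG G) (v)
    (a : Fin 5) : (QQ F G * LL F x v) *ᵥ kap F x a = 0 := by
  obtain ⟨u, w, hw, h⟩ := kap_src F hn x a
  rw [h, Matrix.mulVec_mulVec, Matrix.mul_assoc, QQ_gram F helem hn, Matrix.smul_mulVec, hw,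
    smul_zero]

/-- Gram matrix of the trivial vectors -/
def SS (n : F) : Matrix (Fin 5) (Fin 5) F :=
  !![1,1,1,1,1;1,n,1,1,n;1,1,n,1,n;1,1,1,n,n;1,n,n,n,n*n]

theorem SS_det (n : F) (h1 : n ≠ 1) (h2 : n ≠ 2) : IsUnit (SS F n).det := by
  have e : (SS F n).det = (n - 1) * (n - 1) * (n - 1) * ((n - 1) * (n - 2)) := by
    simp [SS, Matrix.det_succ_row_zero, Fin.sum_univ_succ, Fin.succAbove]
    ring
  rw [e, isUnit_iff_ne_zero]
  have := sub_ne_zero.mpr h1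
  have := sub_ne_zero.mpr h2
  simp [*]

theorem bb_dot (x : XG G) (f : XG G → F) : bb F x ⬝ᵥ f = f x := by
  simp [dotProduct, bb]

theorem kk_dot (helem : ∀ a : G, a ^ 2 = 1) (x : XG G) (i : Fin 3) :
    kk F x i ⬝ᵥ kk F x i = (Fintype.card G : F) := by
  simp only [dotProduct, kk]
  rw [pair_sum F helem x i (i + 1) (succ_ne i).symm (fun a b =>
    (if a = 1 then 1 else 0) * (if a = 1 then 1 else 0))]
  simp

theorem kk_dot' (helem : ∀ a : G, a ^ 2 = 1) (x : XG G) (i j : Fin 3) (hij : i ≠ j) :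
    kk F x i ⬝ᵥ kk F x j = 1 := by
  simp only [dotProduct, kk]
  rw [pair_sum F helem x i j hij (fun a b =>
    (if a = 1 then 1 else 0) * (if b = 1 then 1 else 0))]
  simp

theorem kk_one (helem : ∀ a : G, a ^ 2 = 1) (x : XG G) (i : Fin 3) :
    kk F x i ⬝ᵥ 1 = (Fintype.card G : F) := by
  rw [← kk_dot F helem x i]
  simp only [dotProduct, kk]
  refine Finset.sum_congr rfl fun y _ => ?_
  split_ifs <;> simp

theorem one_one (helem : ∀ a : G, a ^ 2 = 1) (x : XG G) :
    (1 : XG G → F) ⬝ᵥ 1 = (Fintype.card G : F) * Fintype.card G := by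
  have := pair_sum F helem x 0 1 (by decide) (fun a b => 1)
  simp only [dotProduct, Pi.one_apply, mul_one]
  rw [this]; simp

theorem kap_gram (helem : ∀ a : G, a ^ 2 = 1) (x : XG G) (a b : Fin 5) :
    kap F x a ⬝ᵥ kap F x b = SS F (Fintype.card G : F) a b := by
  have h1 : ∀ f : XG G → F, f ⬝ᵥ bb F x = f x := fun f => by rw [dotProduct_comm, bb_dot]
  have h2 : ∀ i, (1 : XG G → F) ⬝ᵥ kk F x i = (Fintype.card G : F) := fun i => by
    rw [dotProduct_comm, kk_one F helem]
  have h3 : ∀ i, kk F x i x = 1 := fun i => by simp [kk, dd_self]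
  have h4 : bb F x x = 1 := by simp [bb]
  have hone := one_one F helem x
  fin_cases a <;> fin_cases b <;> first | exact hone |
    simp [kap, SS, bb_dot, h1, h2, h3, h4, kk_dot F helem, kk_dot' F helem, kk_one F helem]

/-- the matrix of the relation of equal `i`-th coordinates -/
def CC (i : Fin 3) : Matrix (XG G) (XG G) F :=
  Matrix.of fun y z => if y.1 i = z.1 i then 1 else 0

theorem CC_tr (i : Fin 3) : (CC F i : Matrix (XG G) (XG G) F)ᵀ = CC F i := by
  ext y z
  simp [CC, eq_comm]

theorem KK (x : XG G) (i : Fin 3) : (LL F x (Sum.inr i))ᵀ * LL F x (Sum.inr i) = CC F i := by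
  ext y z
  simp [Matrix.mul_apply, LL, CC, dd_eq, eq_comm]

theorem LLd (x : XG G) (i : Fin 3) :
    (LL F x (Sum.inl i))ᵀ * LL F x (Sum.inl i) = Matrix.diagonal (kk F x i) := by
  ext y z
  have hyz : dd x y i = 1 → dd x z i = 1 → (dd x y (i + 1) = dd x z (i + 1) ↔ y = z) :=
    fun h1 h2 => ⟨fun h => pt_ext x y z i (i + 1) (succ_ne i).symm (h1.trans h2.symm) h,
      fun h => by rw [h]⟩
  by_cases h1 : dd x y i = 1 <;> by_cases h2 : dd x z i = 1
  · simp [Matrix.mul_apply, LL, Matrix.diagonal_apply, kk, h1, h2, ← hyz h1 h2, eq_comm]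
  · have : y ≠ z := by rintro rfl; exact h2 h1
    simp [Matrix.mul_apply, LL, h1, h2, this]
  · simp [Matrix.mul_apply, LL, Matrix.diagonal_apply, kk, h1]
  · simp [Matrix.mul_apply, LL, Matrix.diagonal_apply, kk, h1]

theorem KL (helem : ∀ a : G, a ^ 2 = 1) (x : XG G) (i j : Fin 3) (hij : i ≠ j) :
    (LL F x (Sum.inr i))ᵀ * LL F x (Sum.inl j) = CC F i * Matrix.diagonal (kk F x j) := by
  rw [LL_inl F helem x j i hij]
  ext y z
  by_cases h : dd x z j = 1
  · simp [Matrix.mul_apply, LL, Matrix.diagonal_apply, kk, CC, h, ← dd_eq x y z i, eq_comm]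
  · simp [Matrix.mul_apply, LL, Matrix.diagonal_apply, kk, CC, h]

theorem LK (helem : ∀ a : G, a ^ 2 = 1) (x : XG G) (i j : Fin 3) (hij : i ≠ j) :
    (LL F x (Sum.inl j))ᵀ * LL F x (Sum.inr i) = Matrix.diagonal (kk F x j) * CC F i := by
  have := congrArg Matrix.transpose (KL F helem x i j hij)
  simpa [Matrix.transpose_mul, CC_tr] using this

theorem LLo (helem : ∀ a : G, a ^ 2 = 1) (x : XG G) (i j k : Fin 3) (hi : k ≠ i) (hj : k ≠ j) :
    (LL F x (Sum.inl i))ᵀ * LL F x (Sum.inl j)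
      = Matrix.diagonal (kk F x i) * CC F k * Matrix.diagonal (kk F x j) := by
  rw [LL_inl F helem x i k hi, LL_inl F helem x j k hj]
  ext y z
  rw [Matrix.mul_diagonal, Matrix.diagonal_mul]
  by_cases h : dd x z j = 1 <;> by_cases h' : dd x y i = 1
  · simp [Matrix.mul_apply, kk, CC, h, h', ← dd_eq x y z k, eq_comm]
  all_goals simp [Matrix.mul_apply, kk, h, h']

theorem third (i j : Fin 3) : ∃ k, k ≠ i ∧ k ≠ j := by
  revert i j; decide

/-- index of the relation attached to a coordinate -/
def ss : Fin 3 → Fin 5 := ![1, 2, 3]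

theorem rel_zero (y z : XG G) : rel 0 y z ↔ y = z := by simp [rel]

theorem rel_ss (i : Fin 3) (y z : XG G) : rel (ss i) y z ↔ y ≠ z ∧ y.1 i = z.1 i := by
  fin_cases i <;> simp [rel, ss, cIdx]

theorem rel_sum (y z : XG G) : ∑ i : Fin 5, (if rel i y z then (1 : F) else 0) = 1 := by
  have h01 := pt_ext y y z 0 1 (by decide)
  have h02 := pt_ext y y z 0 2 (by decide)
  have h12 := pt_ext y y z 1 2 (by decide)
  simp only [dd_eq] at h01 h02 h12
  rw [Fin.sum_univ_five]
  by_cases h : y = z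
  · subst h; simp [rel]
  · by_cases h0 : y.1 0 = z.1 0 <;> by_cases h1 : y.1 1 = z.1 1 <;> by_cases h2 : y.1 2 = z.1 2 <;>
      simp_all [rel, cIdx, Fin.forall_fin_succ]

theorem adj_zero : (Adj F 0 : Matrix (XG G) (XG G) F) = 1 := by
  ext y z
  simp [Adj, rel_zero, Matrix.one_apply]

theorem adj_ss (i : Fin 3) : (Adj F (ss i) : Matrix (XG G) (XG G) F) = CC F i - 1 := by
  ext y z
  by_cases h : y = z
  · simp [Adj, rel_ss, CC, h]
  · simp [Adj, rel_ss, CC, h, Matrix.one_apply]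

theorem adj_sum : ∑ i, (Adj F i : Matrix (XG G) (XG G) F) = Matrix.vecMulVec 1 1 := by
  ext y z
  rw [Matrix.sum_apply]
  simp only [Adj, Matrix.of_apply, rel_sum]
  simp [Matrix.vecMulVec_apply]

theorem dual_zero (x : XG G) : DualE F x 0 = Matrix.diagonal (bb F x) := by
  ext y z
  by_cases h : y = z
  · simp [DualE, rel_zero, bb, h, eq_comm]
  · simp [DualE, h]

theorem dual_ss (x : XG G) (i : Fin 3) :
    DualE F x (ss i) = Matrix.diagonal (kk F x i) - Matrix.diagonal (bb F x) := by
  ext y z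
  by_cases h : y = z
  · subst h
    by_cases h' : x = y
    · subst h'
      simp [DualE, rel_ss, bb, kk, dd_self]
    · simp [DualE, rel_ss, bb, kk, h', Ne.symm h', dd_eq_one]
  · simp [DualE, h]

theorem dual_sum (x : XG G) : ∑ i, DualE F x i = 1 := by
  ext y z
  rw [Matrix.sum_apply]
  by_cases h : y = z
  · subst h
    rw [Matrix.one_apply_eq, ← rel_sum F x y]
    refine Finset.sum_congr rfl fun i _ => ?_
    simp [DualE]
  · simp [DualE, h]

theorem five_split {M : Type} [AddCommGroup M] (f : Fin 5 → M) :
    f 4 = (∑ i, f i) - f 0 - f (ss 0) - f (ss 1) - f (ss 2) := by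
  rw [Fin.sum_univ_five]
  simp only [ss, Matrix.cons_val_zero, Matrix.cons_val_one, Matrix.cons_val]
  abel

theorem five_cases (P : Fin 5 → Prop) (h0 : P 0) (hs : ∀ i, P (ss i)) (h4 : P 4) (a : Fin 5) :
    P a := by
  fin_cases a
  · exact h0
  · exact hs 0
  · exact hs 1
  · exact hs 2
  · exact h4

theorem T_dual (x : XG G) (a : Fin 5) : DualE F x a ∈ TerwilligerAlg F G x := by
  have h : DualE F x a * Adj F 0 * DualE F x a ∈ TerwilligerAlg F G x :=
    Algebra.subset_adjoin ⟨a, 0, a, rfl⟩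
  have h2 : DualE F x a * Adj F 0 * DualE F x a = DualE F x a := by
    have hd : DualE F x a = Matrix.diagonal (fun y => if rel a x y then (1 : F) else 0) := by
      ext y z
      by_cases h : y = z
      · simp [DualE, h]
      · simp [DualE, h]
    rw [adj_zero, Matrix.mul_one, hd, Matrix.diagonal_mul_diagonal]
    congr 1
    ext y
    split_ifs <;> simp
  rwa [h2] at h

theorem T_adj (x : XG G) (b : Fin 5) : Adj F b ∈ TerwilligerAlg F G x := by
  have h : (∑ a, DualE F x a) * Adj F b * (∑ c, DualE F x c) ∈ TerwilligerAlg F G x := by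
    simp only [Finset.sum_mul, Finset.mul_sum]
    exact Subalgebra.sum_mem _ fun c _ => Subalgebra.sum_mem _ fun a _ =>
      Algebra.subset_adjoin ⟨_, b, _, rfl⟩
  rwa [dual_sum, Matrix.one_mul, Matrix.mul_one] at h

theorem T_CC (x : XG G) (i : Fin 3) : CC F i ∈ TerwilligerAlg F G x := by
  have h := add_mem (T_adj F x (ss i)) (one_mem _)
  rwa [adj_ss, sub_add_cancel] at h

theorem T_bb (x : XG G) : Matrix.diagonal (bb F x) ∈ TerwilligerAlg F G x := by
  rw [← dual_zero]; exact T_dual F x 0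

theorem T_kk (x : XG G) (i : Fin 3) : Matrix.diagonal (kk F x i) ∈ TerwilligerAlg F G x := by
  have h := add_mem (T_dual F x (ss i)) (T_bb F x)
  rwa [dual_ss, sub_add_cancel] at h

theorem T_kap (x : XG G) (a : Fin 5) : Matrix.diagonal (kap F x a) ∈ TerwilligerAlg F G x := by
  fin_cases a
  · exact T_bb F x
  · exact T_kk F x 0
  · exact T_kk F x 1
  · exact T_kk F x 2
  · change Matrix.diagonal (1 : XG G → F) ∈ _
    rw [Matrix.diagonal_one']
    exact one_mem _

theorem T_kapkap (x : XG G) (a b : Fin 5) :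
    Matrix.vecMulVec (kap F x a) (kap F x b) ∈ TerwilligerAlg F G x := by
  have hJ : (Matrix.vecMulVec 1 1 : Matrix (XG G) (XG G) F) ∈ TerwilligerAlg F G x := by
    rw [← adj_sum]
    exact Subalgebra.sum_mem _ fun b _ => T_adj F x b
  have h : Matrix.vecMulVec (kap F x a) (kap F x b)
      = Matrix.diagonal (kap F x a) * Matrix.vecMulVec 1 1 * Matrix.diagonal (kap F x b) := by
    ext y z
    rw [Matrix.mul_diagonal, Matrix.diagonal_mul]
    simp [Matrix.vecMulVec_apply]
  rw [h]
  exact mul_mem (mul_mem (T_kap F x a) hJ) (T_kap F x b)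

theorem T_LL (helem : ∀ a : G, a ^ 2 = 1) (x : XG G) (u v) :
    (LL F x u)ᵀ * LL F x v ∈ TerwilligerAlg F G x := by
  have hll : ∀ i j, (LL F x (Sum.inl i))ᵀ * LL F x (Sum.inl j) ∈ TerwilligerAlg F G x := by
    intro i j
    obtain ⟨k, hi, hj⟩ := third i j
    rw [LLo F helem x i j k hi hj]
    exact mul_mem (mul_mem (T_kk F x i) (T_CC F x k)) (T_kk F x j)
  have chain : ∀ u v j, (LL F x u)ᵀ * LL F x (Sum.inl j) ∈ TerwilligerAlg F G x →
      (LL F x (Sum.inl j))ᵀ * LL F x v ∈ TerwilligerAlg F G x →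
      (LL F x u)ᵀ * LL F x v ∈ TerwilligerAlg F G x := by
    intro u v j h1 h2
    have h := mul_mem h1 h2
    rwa [Matrix.mul_assoc, ← Matrix.mul_assoc (LL F x (Sum.inl j)), gram_ll F helem,
      Matrix.one_mul] at h
  have h1 : ∀ u, (LL F x u)ᵀ * LL F x (Sum.inl 0) ∈ TerwilligerAlg F G x := by
    rintro (i | i)
    · exact hll i 0
    · obtain ⟨k, hk, -⟩ := third i i
      refine chain _ _ k ?_ (hll _ _)
      rw [KL F helem x i k hk.symm]
      exact mul_mem (T_CC F x i) (T_kk F x k)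
  have h2 : ∀ u, (LL F x (Sum.inl 0))ᵀ * LL F x u ∈ TerwilligerAlg F G x := by
    rintro (i | i)
    · exact hll 0 i
    · obtain ⟨k, hk, -⟩ := third i i
      refine chain _ _ k (hll _ _) ?_
      rw [LK F helem x i k hk.symm]
      exact mul_mem (T_kk F x k) (T_CC F x i)
  exact chain u v 0 (h1 u) (h2 v)

/-- the matrices spanning the first block -/
def mm (x : XG G) (u v : Fin 3 ⊕ Fin 3) : Matrix (XG G) (XG G) F :=
  (LL F x u)ᵀ * QQ F G * LL F x v

theorem mm_sub_mem (x : XG G) (u v) (R : Subalgebra F (Matrix (XG G) (XG G) F))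
    (h : ∀ a b, Matrix.vecMulVec (kap F x a) (kap F x b) ∈ R) :
    (LL F x u)ᵀ * LL F x v - mm F x u v ∈ R := by
  obtain ⟨a, ha⟩ := LL_del F x u
  obtain ⟨b, hb⟩ := LL_one F x u
  obtain ⟨c, hc⟩ := LL_del F x v
  obtain ⟨e, he⟩ := LL_one F x v
  have key : (LL F x u)ᵀ * LL F x v - mm F x u v
      = Matrix.vecMulVec (kap F x a) (kap F x c)
        + ((Fintype.card G : F) - 1)⁻¹ • (Matrix.vecMulVec (kap F x b) (kap F x e)
          - Matrix.vecMulVec (kap F x b) (kap F x c) - Matrix.vecMulVec (kap F x a) (kap F x e)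
          + Matrix.vecMulVec (kap F x a) (kap F x c)) := by
    have e1 : ∀ w, w ᵥ* LL F x v = (LL F x v)ᵀ *ᵥ w := fun w => (Matrix.mulVec_transpose _ _).symm
    rw [mm, QQ]
    simp only [Matrix.mul_sub, Matrix.sub_mul, Matrix.mul_one, Matrix.mul_smul, Matrix.smul_mul,
      Matrix.mul_vecMulVec, Matrix.vecMulVec_mul, e1, Matrix.mulVec_sub, ha, hb, hc, he,
      Matrix.sub_vecMulVec, Matrix.vecMulVec_sub]
    simp only [smul_sub, smul_add]
    abel
  rw [key]
  exact add_mem (h _ _) (R.smul_mem (add_mem (sub_mem (sub_mem (h _ _) (h _ _)) (h _ _)) (h _ _)) _)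

theorem T_le (x : XG G) (R : Subalgebra F (Matrix (XG G) (XG G) F))
    (hm : ∀ u v, mm F x u v ∈ R)
    (h : ∀ a b, Matrix.vecMulVec (kap F x a) (kap F x b) ∈ R) : TerwilligerAlg F G x ≤ R := by
  have hL : ∀ u v, (LL F x u)ᵀ * LL F x v ∈ R := fun u v => by
    have := add_mem (mm_sub_mem F x u v R h) (hm u v)
    rwa [sub_add_cancel] at this
  have hbb : Matrix.diagonal (bb F x) ∈ R := by
    have e : Matrix.diagonal (bb F x) = Matrix.vecMulVec (kap F x 0) (kap F x 0) := by
      ext y z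
      change _ = bb F x y * bb F x z
      by_cases hy : y = x <;> by_cases hz : z = x <;>
        by_cases hyz : y = z <;> simp_all [bb]
    rw [e]; exact h 0 0
  have hE : ∀ a, DualE F x a ∈ R := by
    have h0 : DualE F x 0 ∈ R := by rw [dual_zero]; exact hbb
    have hs : ∀ i, DualE F x (ss i) ∈ R := fun i => by
      rw [dual_ss, ← LLd]; exact sub_mem (hL _ _) hbb
    refine five_cases _ h0 hs ?_
    rw [five_split (DualE F x), dual_sum]
    exact sub_mem (sub_mem (sub_mem (sub_mem (one_mem _) h0) (hs 0)) (hs 1)) (hs 2)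
  have hA : ∀ a, Adj F a ∈ R := by
    have h0 : Adj F 0 ∈ R := by rw [adj_zero]; exact one_mem _
    have hs : ∀ i, Adj F (ss i) ∈ R := fun i => by
      rw [adj_ss, ← KK F x]; exact sub_mem (hL _ _) (one_mem _)
    refine five_cases _ h0 hs ?_
    rw [five_split (Adj F), adj_sum]
    exact sub_mem (sub_mem (sub_mem (sub_mem (h 4 4) h0) (hs 0)) (hs 1)) (hs 2)
  refine Algebra.adjoin_le ?_
  rintro _ ⟨a, b, c, rfl⟩
  exact mul_mem (mul_mem (hE a) (hA b)) (hE c)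

theorem exists_three (helem : ∀ a : G, a ^ 2 = 1) (hcard : 3 ≤ Fintype.card G)
    (h4 : Fintype.card G ≠ 4) : ∃ e h a : G, e ≠ 1 ∧ h ≠ 1 ∧ h ≠ e ∧ a ≠ 1 ∧ a ≠ e ∧ a ≠ h ∧
      a ≠ e * h := by
  obtain ⟨e, he⟩ : ∃ e, e ∉ ({1} : Finset G) := by
    by_contra! hcon
    have := Finset.card_le_card (fun g _ => hcon g : Finset.univ ⊆ ({1} : Finset G))
    simp at this
    omega
  obtain ⟨h, hh⟩ : ∃ f, f ∉ ({1, e} : Finset G) := by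
    by_contra! hcon
    have := Finset.card_le_card (fun g _ => hcon g : Finset.univ ⊆ ({1, e} : Finset G))
    have h2 := Finset.card_le_two (a := (1 : G)) (b := e)
    rw [Finset.card_univ] at this
    omega
  simp only [Finset.mem_insert, Finset.mem_singleton, not_or] at he hh
  have heh : e * h ≠ 1 := fun hcon => hh.2 (mul_left_cancel (hcon.trans (sq_one helem e).symm))
  obtain ⟨a, ha⟩ : ∃ a, a ∉ ({1, e, h, e * h} : Finset G) := by
    by_contra! hcon
    have h1 : Finset.univ = ({1, e, h, e * h} : Finset G) := by
      ext g; simpa using hcon g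
    apply h4
    rw [← Finset.card_univ, h1]
    rw [Finset.card_insert_of_notMem, Finset.card_insert_of_notMem, Finset.card_insert_of_notMem,
      Finset.card_singleton]
    · simp [he]
    · simp [hh.1, Ne.symm hh.2]
    · simp [Ne.symm he, Ne.symm hh.1, Ne.symm heh]
  simp only [Finset.mem_insert, Finset.mem_singleton, not_or] at ha
  exact ⟨e, h, a, he, hh.1, hh.2, ha.1, ha.2.1, ha.2.2.1, ha.2.2.2⟩

theorem trade (helem : ∀ a : G, a ^ 2 = 1) (hcard : 3 ≤ Fintype.card G)
    (h4 : Fintype.card G ≠ 4) (x : XG G) : ∃ v : XG G → F, v ≠ 0 ∧ ∀ u, LL F x u *ᵥ v = 0 := by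
  obtain ⟨e, h, a, he, hh, hhe, ha1, hae, hah, haeh⟩ := exists_three helem hcard h4
  have hc := elem_comm helem
  let P : G → G → XG G → F := fun p q => Pi.single (mk hc x p q) 1
  have hsq := sq_one helem
  have hsq' : ∀ p q : G, p * (p * q) = q := fun p q => by rw [← mul_assoc, hsq, one_mul]
  have hlc : ∀ p q r : G, p * (q * r) = q * (p * r) := fun p q r => by
    rw [← mul_assoc, hc p q, mul_assoc]
  have hehn : e * h ≠ 1 := fun hcon => hhe (mul_left_cancel (hcon.trans (hsq e).symm))
  have hca : ∀ p : G, a * p = 1 ↔ a = p := fun p =>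
    ⟨fun h => by rw [← hsq p] at h; exact mul_right_cancel h, fun h => by rw [h, hsq]⟩
  -- the value of the incidence matrices at a point
  have hP0 : ∀ p q i, p ≠ 1 → q ≠ 1 → p * q ≠ 1 → LL F x (Sum.inl i) *ᵥ P p q = 0 := by
    intro p q i hp hq hpq
    have hd := dd_mk hc x p q
    ext g
    simp only [P, Matrix.mulVec_single_one, Matrix.col_apply, LL, Matrix.of_apply, Pi.zero_apply]
    rw [if_neg]
    rintro ⟨h1, -⟩
    fin_cases i
    · exact hp (hd.1.symm.trans h1)
    · exact hq (hd.2.1.symm.trans h1)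
    · exact hpq (hd.2.2.symm.trans h1)
  have hPr0 : ∀ p q, LL F x (Sum.inr 0) *ᵥ P p q = Pi.single p 1 := by
    intro p q
    ext g
    simp [P, LL, (dd_mk hc x p q).1, Pi.single_apply, eq_comm]
  have hPr1 : ∀ p q, LL F x (Sum.inr 1) *ᵥ P p q = Pi.single q 1 := by
    intro p q
    ext g
    simp [P, LL, (dd_mk hc x p q).2.1, Pi.single_apply, eq_comm]
  have hPr2 : ∀ p q, LL F x (Sum.inr 2) *ᵥ P p q = Pi.single (p * q) 1 := by
    intro p q
    ext g
    simp [P, LL, (dd_mk hc x p q).2.2, Pi.single_apply, eq_comm]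
  -- third coordinates
  have s1 : a * (a * h) = h := hsq' _ _
  have s2 : a * (a * (e * h)) = e * h := hsq' _ _
  have s3 : a * e * (a * h) = e * h := by rw [mul_assoc, hlc e, hsq']
  have s4 : a * e * (a * (e * h)) = h := by rw [mul_assoc, hlc e, hsq', hsq']
  have s5 : a * h * a = h := by rw [hc, hsq']
  have s6 : a * h * (a * e) = e * h := by rw [mul_assoc, hlc h, hsq', hc]
  have s7 : a * (e * h) * a = e * h := by rw [hc, hsq']
  have s8 : a * (e * h) * (a * e) = h := by rw [hc (a * (e * h)), s4]
  have n1 : a * e ≠ 1 := fun hcon => hae ((hca _).1 hcon)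
  have n2 : a * h ≠ 1 := fun hcon => hah ((hca _).1 hcon)
  have n3 : a * (e * h) ≠ 1 := fun hcon => haeh ((hca _).1 hcon)
  refine ⟨P a (a * h) - P a (a * (e * h)) - P (a * e) (a * h) + P (a * e) (a * (e * h))
    - P (a * h) a + P (a * h) (a * e) + P (a * (e * h)) a - P (a * (e * h)) (a * e), ?_, ?_⟩
  · intro hcon
    have h1 := congrFun hcon (mk hc x a (a * h))
    have hinj : ∀ p q pp qq, mk hc x p q = mk hc x pp qq ↔ p = pp ∧ q = qq := by
      intro p q pp qq
      constructor
      · intro hm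
        exact ⟨by rw [← (dd_mk hc x p q).1, hm, (dd_mk hc x pp qq).1],
          by rw [← (dd_mk hc x p q).2.1, hm, (dd_mk hc x pp qq).2.1]⟩
      · rintro ⟨rfl, rfl⟩; rfl
    simp [P, Pi.single_apply, hinj, he, hh, hehn] at h1
  · rintro (i | i)
    · simp only [Matrix.mulVec_sub, Matrix.mulVec_add]
      rw [hP0 a (a * h) i ha1 n2 (by rwa [s1]), hP0 a (a * (e * h)) i ha1 n3 (by rwa [s2]),
        hP0 (a * e) (a * h) i n1 n2 (by rwa [s3]), hP0 (a * e) (a * (e * h)) i n1 n3 (by rwa [s4]),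
        hP0 (a * h) a i n2 ha1 (by rwa [s5]), hP0 (a * h) (a * e) i n2 n1 (by rwa [s6]),
        hP0 (a * (e * h)) a i n3 ha1 (by rwa [s7]),
        hP0 (a * (e * h)) (a * e) i n3 n1 (by rwa [s8])]
      simp
    · fin_cases i
      · change LL F x (Sum.inr 0) *ᵥ _ = 0
        simp only [Matrix.mulVec_sub, Matrix.mulVec_add, hPr0]
        abel
      · change LL F x (Sum.inr 1) *ᵥ _ = 0
        simp only [Matrix.mulVec_sub, Matrix.mulVec_add, hPr1]
        abel
      · change LL F x (Sum.inr 2) *ᵥ _ = 0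
        simp only [Matrix.mulVec_sub, Matrix.mulVec_add, hPr2, s1, s2, s3, s4, s5, s6, s7, s8]
        abel

theorem QQ_ne_zero (hcard : 3 ≤ Fintype.card G) (hn : (Fintype.card G : F) ≠ 1) :
    QQ F G ≠ 0 := by
  obtain ⟨g, h, hg, hh, hgh⟩ : ∃ g h : G, g ≠ 1 ∧ h ≠ 1 ∧ g ≠ h := by
    obtain ⟨a, b, c, hab, hac, hbc⟩ := Fintype.two_lt_card_iff.mp (by omega : 2 < Fintype.card G)
    by_cases ha : a = 1
    · exact ⟨b, c, fun h => hab (ha.trans h.symm), fun h => hac (ha.trans h.symm), hbc⟩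
    · by_cases hb : b = 1
      · exact ⟨a, c, ha, fun h => hbc (hb.trans h.symm), hac⟩
      · exact ⟨a, b, ha, hb, hab⟩
  intro hcon
  have h1 := congrFun (congrFun hcon g) h
  have h3 : ((Fintype.card G : F) - 1) ≠ 0 := sub_ne_zero.mpr hn
  simp [QQ, Matrix.vecMulVec_apply, del, hg, hh, hgh, h3] at h1

end Concrete

theorem stmt19 (F : Type) [Field F] (G : Type) [Group G] [Fintype G] [DecidableEq G]
    (helem : ∀ a : G, a ^ 2 = 1) (hcard : 3 ≤ Fintype.card G)
    (hn1 : (Fintype.card G : F) ≠ 1) (hn2 : (Fintype.card G : F) ≠ 2)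
    (hn4 : (Fintype.card G : F) ≠ 4) (x : XG G) :
    Nonempty (TerwilligerAlg F G x ≃ₐ[F]
      (Matrix (Fin 6) (Fin 6) F × Matrix (Fin 5) (Fin 5) F × F)) := by
  have hcard4 : Fintype.card G ≠ 4 := fun h => hn4 (by rw [h]; norm_num)
  obtain ⟨v, hv, hLv⟩ := trade F helem hcard hcard4 x
  have hQk : ∀ u a, QQ F G *ᵥ (LL F x u *ᵥ kap F x a) = 0 := fun u a => by
    rw [Matrix.mulVec_mulVec]; exact QL_kap F helem hn1 x u a
  have hkQ : ∀ u a, kap F x a ᵥ* ((LL F x u)ᵀ * QQ F G) = 0 := fun u a => by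
    rw [← Matrix.mulVec_transpose, Matrix.transpose_mul, QQ_tr, Matrix.transpose_transpose]
    exact QL_kap F helem hn1 x u a
  have hkv : ∀ a, kap F x a ⬝ᵥ v = 0 := fun a => by
    obtain ⟨u, w, -, hw⟩ := kap_src F hn1 x a
    rw [hw, Matrix.mulVec_transpose, ← Matrix.dotProduct_mulVec, hLv, dotProduct_zero]
  have hmm : ∀ u v w z, mm F x u v * mm F x w z
      = Gam F (Fintype.card G : F) v w • mm F x u z := by
    intro u v w z
    calc mm F x u v * mm F x w z
        = (LL F x u)ᵀ * (QQ F G * (LL F x v * (LL F x w)ᵀ)) * QQ F G * LL F x z := by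
          simp only [mm, Matrix.mul_assoc]
      _ = Gam F (Fintype.card G : F) v w • ((LL F x u)ᵀ * (QQ F G * QQ F G) * LL F x z) := by
          rw [QQ_gram F helem hn1]
          simp only [Matrix.mul_smul, Matrix.smul_mul, Matrix.mul_assoc]
      _ = _ := by rw [QQ_sq F hn1, mm]
  have hmne : mm F x (Sum.inl 0) (Sum.inl 0) ≠ 0 := by
    intro hcon
    apply QQ_ne_zero F hcard hn1
    calc QQ F G = (LL F x (Sum.inl 0) * (LL F x (Sum.inl 0))ᵀ) * QQ F G *
          (LL F x (Sum.inl 0) * (LL F x (Sum.inl 0))ᵀ) := by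
          rw [gram_ll F helem, Matrix.one_mul, Matrix.mul_one]
      _ = LL F x (Sum.inl 0) * mm F x (Sum.inl 0) (Sum.inl 0) * (LL F x (Sum.inl 0))ᵀ := by
          simp only [mm, Matrix.mul_assoc]
      _ = 0 := by rw [hcon]; simp
  have hiso := abstract_iso (TerwilligerAlg F G x) (mm F x)
    (fun a b => Matrix.vecMulVec (kap F x a) (kap F x b))
    (Gam F (Fintype.card G : F)) (SS F (Fintype.card G : F))
    (Gam_det F _ hn1 hn4) (SS_det F _ hn1 hn2) hmm
    (fun a b c d => by
      rw [Matrix.vecMulVec_mul_vecMulVec, kap_gram F helem, Matrix.vecMulVec_smul])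
    (fun u v a b => by
      rw [Matrix.mul_vecMulVec, mm, ← Matrix.mulVec_mulVec, ← Matrix.mulVec_mulVec, hQk]
      simp)
    (fun a b u v => by
      rw [Matrix.vecMulVec_mul, mm, ← Matrix.vecMul_vecMul, hkQ]
      simp)
    (Sum.inl 0) (Sum.inl 0) hmne 0 0
    (fun hcon => by
      have h1 := congrFun (congrFun hcon x) x
      simp [Matrix.vecMulVec_apply, kap, bb] at h1)
    (Matrix.vecMulVec v 1)
    (fun hcon => hv (by
      ext y
      have h1 := congrFun (congrFun hcon y) x
      simpa [Matrix.vecMulVec_apply] using h1))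
    (fun u w => by
      rw [Matrix.mul_vecMulVec, mm, ← Matrix.mulVec_mulVec, hLv]
      simp)
    (fun a b => by
      rw [Matrix.vecMulVec_mul_vecMulVec, hkv]
      simp)
    (fun u v => by
      have h := sub_mem (T_LL F helem x u v) (mm_sub_mem F x u v _ (T_kapkap F x))
      rwa [sub_sub_cancel] at h)
    (T_kapkap F x) (T_le F x)
  obtain ⟨f⟩ := hiso
  exact ⟨f.trans (AlgEquiv.prodCongr (Matrix.reindexAlgEquiv F F
    (finSumFinEquiv : Fin 3 ⊕ Fin 3 ≃ Fin 6)) AlgEquiv.refl)⟩
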